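/- Let z ∈ ℂ with Re z < 0. Then the set { x ↦ −ψ''(x) + i·x³·ψ(x) − z·ψ(x) : ψ smooth and compactly supported on ℝ } is dense in L²(ℝ, ℂ): for every square-integrable φ : ℝ → ℂ and every ε > 0 there exists a smooth compactly supported ψ : ℝ → ℂ with ∫_ℝ |−ψ''(x) + i·x³·ψ(x) − z·ψ(x) − φ(x)|² dx < ε². -/

import Mathlib

open MeasureTheory

/-!
A function `u ∈ L²` orthogonal to the range of `-d²/dx² + V` satisfies `u'' = V̄ u` in the sense of
distributions. Subtracting a second primitive of `V̄ u` leaves a distribution with vanishing second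
derivative, which is affine, so `u` is almost everywhere equal to a classical solution `y`. As
`(|y|²)'' = 2 (Re V |y|² + |y'|²) ≥ 0` when `Re V ≥ 0`, the function `|y|²` is convex, and a convex
integrable function on the line is nonpositive: integrate `2 g a ≤ g (a + t) + g (a - t)` in `t`.
Hence `u = 0`. For `V = i x³ - z` one has `Re V = -Re z > 0`.

A function `φ` that is not a.e. measurable has to be covered as well. Then `⟪g, φ⟫` fails to be a.e.
measurable for some `g` in any dense subset of `L²`, and for this `g` the Bochner integral of
`|g - φ|²` is `0` by convention.
-/

open Filter Set
open scoped ContDiff Convolution InnerProductSpace Topology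

theorem intervalIntegrable_of_locallyIntegrable {F : Type*} [NormedAddCommGroup F] {f : ℝ → F}
    {μ : Measure ℝ} (hf : LocallyIntegrable f μ) (a b : ℝ) : IntervalIntegrable f μ a b :=
  (hf.integrableOn_isCompact isCompact_uIcc).intervalIntegrable

theorem locallyIntegrable_continuous_mul {X R : Type*} [TopologicalSpace X] [MeasurableSpace X]
    [OpensMeasurableSpace X] [LocallyCompactSpace X] [T2Space X] [NormedRing R]
    [SecondCountableTopologyEither X R] {q f : X → R} {μ : Measure X} (hq : Continuous q)
    (hf : LocallyIntegrable f μ) : LocallyIntegrable (q * f) μ :=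
  locallyIntegrableOn_univ.1 ((locallyIntegrableOn_univ.2 hf).continuousOn_mul hq.continuousOn
    isOpen_univ.isLocallyClosed)

theorem continuous_primitive_of_locallyIntegrable {F : Type*} [NormedAddCommGroup F]
    [NormedSpace ℝ F] {f : ℝ → F} (hf : LocallyIntegrable f) (a : ℝ) :
    Continuous fun x ↦ ∫ t in a..x, f t :=
  intervalIntegral.continuous_primitive (intervalIntegrable_of_locallyIntegrable hf) a

section DistributionalDerivative

variable {E : Type*} [NormedAddCommGroup E] [NormedSpace ℝ E]

/-- `f` is the second derivative of `u` on `ℝ` in the sense of distributions, tested against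
real-valued test functions. Local integrability of `u` and `f` is not part of the definition. -/
def HasWeakSecondDeriv (u f : ℝ → E) : Prop :=
  ∀ ψ : ℝ → ℝ, ContDiff ℝ ∞ ψ → HasCompactSupport ψ →
    ∫ x, deriv (deriv ψ) x • u x = ∫ x, ψ x • f x

theorem hasDerivAt_convolution_lsmul {κ : ℝ → ℝ} {h : ℝ → E} (hκ : ContDiff ℝ ∞ κ)
    (hκc : HasCompactSupport κ) (hh : LocallyIntegrable h) (x : ℝ) :
    HasDerivAt (κ ⋆[.lsmul ℝ ℝ, volume] h) ((deriv κ ⋆[.lsmul ℝ ℝ, volume] h) x) x :=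
  hκc.hasDerivAt_convolution_left _ (hκ.of_le (by exact_mod_cast le_top)) hh x

theorem deriv_deriv_comp_const_sub (κ : ℝ → E) (x : ℝ) :
    deriv (deriv fun t ↦ κ (x - t)) = fun t ↦ deriv (deriv κ) (x - t) := by
  have h : deriv (fun t ↦ κ (x - t)) = fun t ↦ -deriv κ (x - t) :=
    funext (deriv_comp_const_sub κ x)
  ext t
  rw [h, deriv.fun_neg, deriv_comp_const_sub, neg_neg]

theorem exists_eq_add_smul_of_hasDerivAt_hasDerivAt_zero {y y' : ℝ → E}
    (hy : ∀ x, HasDerivAt y (y' x) x) (hy' : ∀ x, HasDerivAt y' 0 x) :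
    ∃ p v : E, ∀ x, y x = p + x • v := by
  have hy'0 (x : ℝ) : y' x = y' 0 :=
    is_const_of_deriv_eq_zero (fun t ↦ (hy' t).differentiableAt) (fun t ↦ (hy' t).deriv) x 0
  have hsub (x : ℝ) : HasDerivAt (fun t ↦ y t - t • y' 0) 0 x := by
    simpa [hy'0 x] using (hy x).fun_sub ((hasDerivAt_id x).smul_const (y' 0))
  refine ⟨y 0, y' 0, fun x ↦ ?_⟩
  have := is_const_of_deriv_eq_zero (fun t ↦ (hsub t).differentiableAt) (fun t ↦ (hsub t).deriv) x 0
  simpa [sub_eq_iff_eq_add] using this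

theorem HasWeakSecondDeriv.convolution_eq_add_smul {κ : ℝ → ℝ} {h : ℝ → E}
    (h0 : HasWeakSecondDeriv h 0) (hκ : ContDiff ℝ ∞ κ) (hκc : HasCompactSupport κ)
    (hh : LocallyIntegrable h) :
    ∃ p v : E, ∀ x, (κ ⋆[.lsmul ℝ ℝ, volume] h) x = p + x • v := by
  have hκ' : ContDiff ℝ ∞ (deriv κ) := hκ.iterate_deriv 1
  refine exists_eq_add_smul_of_hasDerivAt_hasDerivAt_zero
    (hasDerivAt_convolution_lsmul hκ hκc hh) fun x ↦ ?_
  convert hasDerivAt_convolution_lsmul hκ' hκc.deriv hh x using 1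
  have hκx : ContDiff ℝ ∞ fun t ↦ κ (x - t) := by fun_prop
  have htest := h0 _ hκx (hκc.comp_homeomorph (Homeomorph.subLeft x))
  rw [deriv_deriv_comp_const_sub] at htest
  simp [convolution_lsmul_swap, htest]

theorem ae_eq_add_smul_of_tendsto {h : ℝ → E} {p v : ℕ → E}
    (hlim : ∀ᵐ x, Tendsto (fun n ↦ p n + x • v n) atTop (𝓝 (h x))) :
    ∃ p₀ v₀ : E, h =ᵐ[volume] fun x ↦ p₀ + x • v₀ := by
  obtain ⟨a, ha⟩ := hlim.exists
  obtain ⟨b, hb, hba⟩ := (hlim.and (Measure.ae_ne volume a)).exists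
  have hslope : Tendsto v atTop (𝓝 ((b - a)⁻¹ • (h b - h a))) := by
    refine ((hb.sub ha).const_smul (b - a)⁻¹).congr fun n ↦ ?_
    rw [add_sub_add_left_eq_sub, ← sub_smul, inv_smul_smul₀ (sub_ne_zero.2 hba)]
  have hp : Tendsto p atTop (𝓝 (h a - a • (b - a)⁻¹ • (h b - h a))) :=
    (ha.sub (hslope.const_smul a)).congr fun n ↦ add_sub_cancel_right _ _
  refine ⟨h a - a • (b - a)⁻¹ • (h b - h a), (b - a)⁻¹ • (h b - h a), ?_⟩
  filter_upwards [hlim] with x hx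
  exact tendsto_nhds_unique hx (hp.add (hslope.const_smul x))

theorem HasWeakSecondDeriv.sub {u f v g : ℝ → E} (hu : HasWeakSecondDeriv u f)
    (hv : HasWeakSecondDeriv v g) (hul : LocallyIntegrable u) (hvl : LocallyIntegrable v)
    (hfl : LocallyIntegrable f) (hgl : LocallyIntegrable g) :
    HasWeakSecondDeriv (u - v) (f - g) := by
  intro ψ hψ hψc
  have hψ'' : Continuous (deriv (deriv ψ)) := (hψ.iterate_deriv 2).continuous
  simp only [Pi.sub_apply, smul_sub]
  rw [integral_sub (hul.integrable_smul_left_of_hasCompactSupport hψ'' hψc.deriv.deriv)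
      (hvl.integrable_smul_left_of_hasCompactSupport hψ'' hψc.deriv.deriv),
    integral_sub (hfl.integrable_smul_left_of_hasCompactSupport hψ.continuous hψc)
      (hgl.integrable_smul_left_of_hasCompactSupport hψ.continuous hψc),
    hu ψ hψ hψc, hv ψ hψ hψc]

variable [CompleteSpace E]

theorem exists_smooth_ae_convolution_tendsto {h : ℝ → E} (hh : LocallyIntegrable h) :
    ∃ κ : ℕ → ℝ → ℝ, (∀ n, ContDiff ℝ ∞ (κ n)) ∧ (∀ n, HasCompactSupport (κ n)) ∧
      ∀ᵐ x, Tendsto (fun n ↦ (κ n ⋆[.lsmul ℝ ℝ, volume] h) x) atTop (𝓝 (h x)) := by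
  let φ (n : ℕ) : ContDiffBump (0 : ℝ) :=
    ⟨(n + 1 : ℝ)⁻¹ / 2, (n + 1 : ℝ)⁻¹, by positivity, half_lt_self (by positivity)⟩
  refine ⟨fun n ↦ (φ n).normed volume, fun n ↦ (φ n).contDiff_normed,
    fun n ↦ (φ n).hasCompactSupport_normed, ?_⟩
  refine ContDiffBump.ae_convolution_tendsto_right_of_locallyIntegrable (K := 2) ?_ ?_ hh
  · simpa only [one_div] using tendsto_one_div_add_atTop_nhds_zero_nat (𝕜 := ℝ)
  · exact .of_forall fun n ↦ (mul_div_cancel₀ _ two_ne_zero).ge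

theorem HasWeakSecondDeriv.ae_eq_add_smul {h : ℝ → E} (h0 : HasWeakSecondDeriv h 0)
    (hh : LocallyIntegrable h) : ∃ p v : E, h =ᵐ[volume] fun x ↦ p + x • v := by
  obtain ⟨κ, hκ, hκc, hlim⟩ := exists_smooth_ae_convolution_tendsto hh
  choose p v hpv using fun n ↦ h0.convolution_eq_add_smul (hκ n) (hκc n) hh
  simp only [hpv] at hlim
  exact ae_eq_add_smul_of_tendsto hlim

theorem integral_mul_eq_neg_integral_deriv_mul_primitive {ψ f : ℝ → ℝ} (hψ : ContDiff ℝ 1 ψ)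
    (hψc : HasCompactSupport ψ) (hf : LocallyIntegrable f) :
    ∫ x, ψ x * f x = -∫ x, deriv ψ x * ∫ t in 0..x, f t := by
  obtain ⟨R, hR0, hR⟩ := hψc.isBounded.subset_ball_lt 0 0
  simp only [Real.ball_eq_Ioo, zero_sub, zero_add] at hR
  have hvanish {x : ℝ} (hx : x ∉ Ioo (-R) R) : ψ x = 0 :=
    image_eq_zero_of_notMem_tsupport (mt (@hR x) hx)
  have hsupp {g : ℝ → ℝ} (hg : Function.support g ⊆ tsupport ψ) :
      ∫ x in -R..R, g x = ∫ x, g x :=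
    intervalIntegral.integral_eq_integral_of_support_subset
      ((hg.trans hR).trans Ioo_subset_Ioc_self)
  have hF : AbsolutelyContinuousOnInterval (fun x ↦ ∫ t in 0..x, f t) (-R) R :=
    (intervalIntegrable_of_locallyIntegrable hf _ _).absolutelyContinuousOnInterval_intervalIntegral
      (mem_uIcc_of_le (neg_nonpos.2 hR0.le) hR0.le)
  have hparts := hψ.contDiffOn.absolutelyContinuousOnInterval.integral_mul_deriv_eq_deriv_mul hF
  have hderiv : ∀ᵐ x, deriv (fun x ↦ ∫ t in 0..x, f t) x = f x := by
    filter_upwards [_root_.LocallyIntegrable.ae_hasDerivAt_integral hf] with x hx using (hx 0).deriv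
  have hswap : ∫ x, ψ x * deriv (fun x ↦ ∫ t in 0..x, f t) x = ∫ x, ψ x * f x := by
    refine integral_congr_ae ?_
    filter_upwards [hderiv] with x hx using by rw [hx]
  rwa [hvanish (by simp), hvanish (by simp), zero_mul, zero_mul, sub_zero, zero_sub,
    hsupp ((Function.support_mul_subset_left _ _).trans (subset_tsupport ψ)),
    hsupp ((Function.support_mul_subset_left _ _).trans support_deriv_subset), hswap] at hparts

theorem integral_smul_eq_neg_integral_deriv_smul_primitive {ψ : ℝ → ℝ} {f : ℝ → E}
    (hψ : ContDiff ℝ 1 ψ) (hψc : HasCompactSupport ψ) (hf : LocallyIntegrable f) :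
    ∫ x, ψ x • f x = -∫ x, deriv ψ x • ∫ t in 0..x, f t := by
  have hfi : ∀ a b, IntervalIntegrable f volume a b := intervalIntegrable_of_locallyIntegrable hf
  have hF := continuous_primitive_of_locallyIntegrable hf 0
  refine SeparatingDual.eq_iff_forall_dual_eq (R := ℝ).2 fun ℓ ↦ ?_
  have hℓf : LocallyIntegrable fun x ↦ ℓ (f x) :=
    locallyIntegrableOn_univ.1 (ℓ.locallyIntegrableOn_comp (locallyIntegrableOn_univ.2 hf))
  have hψf : Integrable fun x ↦ ψ x • f x :=
    hf.integrable_smul_left_of_hasCompactSupport hψ.continuous hψc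
  have hψF : Integrable fun x ↦ deriv ψ x • ∫ t in 0..x, f t :=
    hF.locallyIntegrable.integrable_smul_left_of_hasCompactSupport
      (hψ.continuous_deriv le_rfl) hψc.deriv
  have hℓF (x : ℝ) : ℓ (∫ t in 0..x, f t) = ∫ t in 0..x, ℓ (f t) :=
    (ℓ.intervalIntegral_comp_comm (hfi 0 x)).symm
  rw [map_neg, ← ℓ.integral_comp_comm hψf, ← ℓ.integral_comp_comm hψF]
  simpa only [map_smul, hℓF, smul_eq_mul] using
    integral_mul_eq_neg_integral_deriv_mul_primitive hψ hψc hℓf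

theorem hasWeakSecondDeriv_primitive_primitive {f : ℝ → E} (hf : LocallyIntegrable f) :
    HasWeakSecondDeriv (fun x ↦ ∫ t in 0..x, ∫ s in 0..t, f s) f := by
  intro ψ hψ hψc
  have hF := continuous_primitive_of_locallyIntegrable hf 0
  have hψ' : ContDiff ℝ ∞ (deriv ψ) := hψ.iterate_deriv 1
  have h1 : (1 : WithTop ℕ∞) ≤ ∞ := by exact_mod_cast le_top
  rw [integral_smul_eq_neg_integral_deriv_smul_primitive (hψ.of_le h1) hψc hf,
    integral_smul_eq_neg_integral_deriv_smul_primitive (hψ'.of_le h1) hψc.deriv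
      hF.locallyIntegrable, neg_neg]

theorem HasWeakSecondDeriv.ae_eq_add_smul_add_primitive {u f : ℝ → E}
    (h : HasWeakSecondDeriv u f) (hu : LocallyIntegrable u) (hf : LocallyIntegrable f) :
    ∃ p v : E, u =ᵐ[volume] fun x ↦ p + x • v + ∫ t in 0..x, ∫ s in 0..t, f s := by
  let w (x : ℝ) : E := ∫ t in 0..x, ∫ s in 0..t, f s
  have hF := continuous_primitive_of_locallyIntegrable hf 0
  have hw : LocallyIntegrable w :=
    (continuous_primitive_of_locallyIntegrable hF.locallyIntegrable 0).locallyIntegrable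
  have h0 : HasWeakSecondDeriv (u - w) 0 := by
    simpa using h.sub (hasWeakSecondDeriv_primitive_primitive hf) hu hw hf hf
  obtain ⟨p, v, hpv⟩ := h0.ae_eq_add_smul (hu.sub hw)
  refine ⟨p, v, ?_⟩
  filter_upwards [hpv] with x hx using sub_eq_iff_eq_add.1 hx

theorem HasWeakSecondDeriv.exists_ae_eq_hasDerivAt {u : ℝ → ℂ} {q : ℝ → ℂ}
    (h : HasWeakSecondDeriv u (q * u)) (hu : LocallyIntegrable u) (hq : Continuous q) :
    ∃ y y' : ℝ → ℂ, u =ᵐ[volume] y ∧ (∀ x, HasDerivAt y (y' x) x) ∧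
      ∀ x, HasDerivAt y' (q x * y x) x := by
  have hqu : LocallyIntegrable (q * u) := locallyIntegrable_continuous_mul hq hu
  have hF := continuous_primitive_of_locallyIntegrable hqu 0
  obtain ⟨p, v, huy⟩ := h.ae_eq_add_smul_add_primitive hu hqu
  set y : ℝ → ℂ := fun x ↦ p + x • v + ∫ t in 0..x, ∫ s in 0..t, (q * u) s
  have hy (x : ℝ) : HasDerivAt y (v + ∫ t in 0..x, (q * u) t) x := by
    simpa only [id_eq, one_smul] using (((hasDerivAt_id x).smul_const v).const_add p).fun_add
      (hF.integral_hasStrictDerivAt 0 x).hasDerivAt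
  have hyc : Continuous y := continuous_iff_continuousAt.2 fun x ↦ (hy x).continuousAt
  have hF_eq (x : ℝ) : ∫ t in 0..x, (q * u) t = ∫ t in 0..x, q t * y t :=
    intervalIntegral.integral_congr_ae (huy.mono fun t ht _ ↦ congrArg (q t * ·) ht)
  refine ⟨y, _, huy, hy, fun x ↦ ?_⟩
  simp only [hF_eq]
  exact ((hq.mul hyc).integral_hasStrictDerivAt 0 x).hasDerivAt.const_add v

end DistributionalDerivative

section Convexity

theorem convexOn_univ_norm_sq {F : Type*} [NormedAddCommGroup F] [InnerProductSpace ℝ F]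
    {y y' y'' : ℝ → F} (hy : ∀ x, HasDerivAt y (y' x) x) (hy' : ∀ x, HasDerivAt y' (y'' x) x)
    (hnonneg : ∀ x, 0 ≤ ⟪y x, y'' x⟫_ℝ) : ConvexOn ℝ univ fun x ↦ ‖y x‖ ^ 2 := by
  have h1 (x : ℝ) : HasDerivAt (fun t ↦ ‖y t‖ ^ 2) (2 * ⟪y x, y' x⟫_ℝ) x := (hy x).norm_sq
  have h2 (x : ℝ) :
      HasDerivAt (fun t ↦ 2 * ⟪y t, y' t⟫_ℝ) (2 * (⟪y x, y'' x⟫_ℝ + ⟪y' x, y' x⟫_ℝ)) x :=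
    ((hy x).inner ℝ (hy' x)).const_mul 2
  have hderiv : deriv (fun x ↦ ‖y x‖ ^ 2) = fun x ↦ 2 * ⟪y x, y' x⟫_ℝ :=
    funext fun x ↦ (h1 x).deriv
  refine convexOn_univ_of_deriv2_nonneg (fun x ↦ (h1 x).differentiableAt)
    (hderiv ▸ fun x ↦ (h2 x).differentiableAt) fun x ↦ ?_
  change 0 ≤ deriv (deriv fun x ↦ ‖y x‖ ^ 2) x
  rw [hderiv, (h2 x).deriv]
  have := hnonneg x
  have := real_inner_self_nonneg (x := y' x)
  positivity

theorem nonpos_of_convexOn_univ_of_integrable {X : Type*} [AddCommGroup X] [Module ℝ X]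
    [MeasurableSpace X] [MeasurableAdd X] [MeasurableNeg X] {μ : Measure X}
    [μ.IsAddLeftInvariant] [μ.IsNegInvariant] (hμ : ¬IsFiniteMeasure μ) {g : X → ℝ}
    (hconv : ConvexOn ℝ univ g) (hg : Integrable g μ) (a : X) : g a ≤ 0 := by
  have hmid (t : X) : 2 * g a ≤ g (a + t) + g (a - t) := by
    have h := hconv.2 (mem_univ (a + t)) (mem_univ (a - t)) (by norm_num : (0 : ℝ) ≤ 1 / 2)
      (by norm_num : (0 : ℝ) ≤ 1 / 2) (by norm_num)
    rw [← smul_add, add_add_sub_cancel, ← two_smul ℝ a, smul_smul,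
      one_div_mul_cancel two_ne_zero, one_smul] at h
    simp only [smul_eq_mul] at h
    linarith
  by_contra! ha
  have hsum : Integrable (fun t ↦ g (a + t) + g (a - t)) μ :=
    (hg.comp_add_left a).add (hg.comp_sub_left a)
  have hconst : Integrable (fun _ ↦ 2 * g a) μ :=
    hsum.mono' aestronglyMeasurable_const
      (.of_forall fun t ↦ (Real.norm_of_nonneg (by positivity)).trans_le (hmid t))
  rcases integrable_const_iff.1 hconst with h0 | hfin
  · linarith
  · exact hμ hfin

end Convexity

section Schrodinger

theorem HasWeakSecondDeriv.ae_eq_zero_of_memLp {u q : ℝ → ℂ}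
    (h : HasWeakSecondDeriv u (q * u)) (hu : MemLp u 2 volume) (hq : Continuous q)
    (hre : ∀ x, 0 ≤ (q x).re) : u =ᵐ[volume] 0 := by
  obtain ⟨y, y', huy, hy, hy'⟩ :=
    h.exists_ae_eq_hasDerivAt (hu.locallyIntegrable one_le_two) hq
  have hinner (x : ℝ) : ⟪y x, q x * y x⟫_ℝ = (q x).re * ‖y x‖ ^ 2 := by
    rw [Complex.inner, mul_assoc, Complex.mul_conj']
    exact_mod_cast Complex.re_mul_ofReal _ _
  have hconv : ConvexOn ℝ univ fun x ↦ ‖y x‖ ^ 2 :=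
    convexOn_univ_norm_sq hy hy' fun x ↦ hinner x ▸ mul_nonneg (hre x) (sq_nonneg _)
  have hint : Integrable fun x ↦ ‖y x‖ ^ 2 :=
    ((memLp_congr_ae huy).1 hu).integrable_norm_pow two_ne_zero
  have hinf : ¬IsFiniteMeasure (volume : Measure ℝ) := fun h ↦
    (measure_ne_top volume univ) Real.volume_univ
  refine huy.trans (.of_forall fun x ↦ ?_)
  have hx := nonpos_of_convexOn_univ_of_integrable hinf hconv hint x
  exact norm_eq_zero.1 (pow_eq_zero_iff two_ne_zero |>.1 (hx.antisymm (sq_nonneg _)))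

/-- The Schrödinger operator `p² + V = -d²/dx² + V` on the line with complex potential `V`, as a
formal expression applied to an arbitrary function. -/
noncomputable def schrodinger (V ψ : ℝ → ℂ) (x : ℝ) : ℂ :=
  -deriv (deriv ψ) x + V x * ψ x

/-- The space `C_c^∞(ℝ)` of complex-valued test functions, as a space of functions. -/
def testFunctions : Submodule ℂ (ℝ → ℂ) where
  carrier := {ψ | ContDiff ℝ ∞ ψ ∧ HasCompactSupport ψ}
  add_mem' hψ hχ := ⟨hψ.1.add hχ.1, hψ.2.add hχ.2⟩
  zero_mem' := ⟨contDiff_const, .zero⟩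
  smul_mem' c _ hψ := ⟨hψ.1.const_smul c, hψ.2.mono (Function.support_const_smul_subset c _)⟩

variable {V : ℝ → ℂ}

theorem differentiable_of_mem_testFunctions {ψ : ℝ → ℂ} (hψ : ψ ∈ testFunctions) :
    Differentiable ℝ ψ :=
  hψ.1.differentiable (by simp)

theorem deriv_mem_testFunctions {ψ : ℝ → ℂ} (hψ : ψ ∈ testFunctions) :
    deriv ψ ∈ testFunctions :=
  ⟨hψ.1.iterate_deriv 1, hψ.2.deriv⟩

theorem schrodinger_add {ψ χ : ℝ → ℂ} (hψ : ψ ∈ testFunctions) (hχ : χ ∈ testFunctions) :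
    schrodinger V (ψ + χ) = schrodinger V ψ + schrodinger V χ := by
  have hadd {ψ χ : ℝ → ℂ} (hψ : ψ ∈ testFunctions) (hχ : χ ∈ testFunctions) :
      deriv (ψ + χ) = deriv ψ + deriv χ :=
    funext fun x ↦ deriv_add (differentiable_of_mem_testFunctions hψ x)
      (differentiable_of_mem_testFunctions hχ x)
  ext x
  simp only [schrodinger, hadd hψ hχ,
    hadd (deriv_mem_testFunctions hψ) (deriv_mem_testFunctions hχ), Pi.add_apply]
  ring

theorem schrodinger_smul (c : ℂ) (ψ : ℝ → ℂ) :
    schrodinger V (c • ψ) = c • schrodinger V ψ := by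
  have hsmul (ψ : ℝ → ℂ) : deriv (c • ψ) = c • deriv ψ := funext fun _ ↦ deriv_const_smul_field c ψ
  ext x
  simp only [schrodinger, hsmul, Pi.smul_apply, smul_eq_mul]
  ring

theorem memLp_schrodinger (hV : Continuous V) {ψ : ℝ → ℂ} (hψ : ψ ∈ testFunctions) :
    MemLp (schrodinger V ψ) 2 volume := by
  have hψ'' := deriv_mem_testFunctions (deriv_mem_testFunctions hψ)
  exact (hψ''.1.continuous.neg.add (hV.mul hψ.1.continuous)).memLp_of_hasCompactSupport
    (hψ''.2.neg.add hψ.2.mul_left)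

/-- The Schrödinger operator with continuous potential as an unbounded operator on `L²(ℝ)`, with
domain the test functions. -/
noncomputable def schrodingerL2 (V : ℝ → ℂ) (hV : Continuous V) :
    testFunctions →ₗ[ℂ] Lp ℂ 2 (volume : Measure ℝ) where
  toFun ψ := (memLp_schrodinger hV ψ.2).toLp (schrodinger V ψ)
  map_add' ψ χ := by
    simp only [Submodule.coe_add, schrodinger_add ψ.2 χ.2]
    rfl
  map_smul' c ψ := by
    simp only [Submodule.coe_smul, schrodinger_smul]
    rfl

theorem coeFn_schrodingerL2 (hV : Continuous V) (ψ : testFunctions) :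
    schrodingerL2 V hV ψ =ᵐ[volume] schrodinger V ψ :=
  MemLp.coeFn_toLp (memLp_schrodinger hV ψ.2)

theorem deriv_ofReal_comp {ψ : ℝ → ℝ} (hψ : Differentiable ℝ ψ) :
    deriv (fun x ↦ (ψ x : ℂ)) = fun x ↦ ((deriv ψ x : ℝ) : ℂ) :=
  funext fun x ↦ (hψ x).hasDerivAt.ofReal_comp.deriv

theorem schrodinger_ofReal_comp {ψ : ℝ → ℝ} (hψ : ContDiff ℝ ∞ ψ) (x : ℝ) :
    schrodinger V (fun t ↦ (ψ t : ℂ)) x = -((deriv (deriv ψ) x : ℝ) : ℂ) + V x * ψ x := by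
  have hψ' : ContDiff ℝ ∞ (deriv ψ) := hψ.iterate_deriv 1
  rw [schrodinger, deriv_ofReal_comp (hψ.differentiable (by simp)),
    deriv_ofReal_comp (hψ'.differentiable (by simp))]

theorem ofReal_comp_mem_testFunctions {ψ : ℝ → ℝ} (hψ : ContDiff ℝ ∞ ψ)
    (hψc : HasCompactSupport ψ) : (fun x ↦ (ψ x : ℂ)) ∈ testFunctions :=
  ⟨Complex.ofRealCLM.contDiff.comp hψ, hψc.comp_left Complex.ofReal_zero⟩

theorem hasWeakSecondDeriv_of_mem_orthogonal_range (hV : Continuous V)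
    {u : Lp ℂ 2 (volume : Measure ℝ)} (hu : u ∈ (LinearMap.range (schrodingerL2 V hV))ᗮ) :
    HasWeakSecondDeriv u (star V * ⇑u) := by
  intro ψ hψ hψc
  have hul : LocallyIntegrable u := (Lp.memLp u).locallyIntegrable one_le_two
  have hVu : LocallyIntegrable (star V * ⇑u) := locallyIntegrable_continuous_mul hV.star hul
  have hψ'' : Continuous (deriv (deriv ψ)) := (hψ.iterate_deriv 2).continuous
  let Ψ : testFunctions := ⟨_, ofReal_comp_mem_testFunctions hψ hψc⟩
  have horth : ∫ x, (ψ x • (star V * ⇑u) x - deriv (deriv ψ) x • u x) = 0 := by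
    rw [← (Submodule.mem_orthogonal _ _).1 hu _ ⟨Ψ, rfl⟩, L2.inner_def]
    refine integral_congr_ae ?_
    filter_upwards [coeFn_schrodingerL2 hV Ψ] with x hx
    rw [hx, schrodinger_ofReal_comp hψ]
    simp only [RCLike.inner_apply, map_add, map_neg, map_mul, Complex.conj_ofReal, Pi.mul_apply,
      Pi.star_apply, Complex.real_smul, RCLike.star_def]
    ring
  rw [integral_sub (hVu.integrable_smul_left_of_hasCompactSupport hψ.continuous hψc)
    (hul.integrable_smul_left_of_hasCompactSupport hψ'' hψc.deriv.deriv)] at horth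
  exact (sub_eq_zero.1 horth).symm

theorem denseRange_schrodingerL2 (hV : Continuous V) (hre : ∀ x, 0 ≤ (V x).re) :
    DenseRange (schrodingerL2 V hV) := by
  have hbot : (LinearMap.range (schrodingerL2 V hV))ᗮ = ⊥ := by
    refine (Submodule.eq_bot_iff _).2 fun u hu ↦ (Lp.eq_zero_iff_ae_eq_zero).2 ?_
    exact (hasWeakSecondDeriv_of_mem_orthogonal_range hV hu).ae_eq_zero_of_memLp (Lp.memLp u)
      hV.star hre
  rw [DenseRange, ← LinearMap.coe_range, Submodule.dense_iff_topologicalClosure_eq_top,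
    Submodule.topologicalClosure_eq_top_iff, hbot]

end Schrodinger

section Approximation

variable {X E : Type*} [MeasurableSpace X] {μ : Measure X} [NormedAddCommGroup E]
  [InnerProductSpace ℝ E]

theorem aestronglyMeasurable_inner_of_dense {S : Set (Lp E 2 μ)} (hS : Dense S) {φ : X → E}
    (hφ : ∀ g ∈ S, AEStronglyMeasurable (fun x ↦ ⟪g x, φ x⟫_ℝ) μ) (g : Lp E 2 μ) :
    AEStronglyMeasurable (fun x ↦ ⟪g x, φ x⟫_ℝ) μ := by
  obtain ⟨s, hsS, hsg⟩ := mem_closure_iff_seq_limit.1 (hS g)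
  obtain ⟨ns, -, hlim⟩ := (tendstoInMeasure_of_tendsto_Lp hsg).exists_seq_tendsto_ae
  refine aestronglyMeasurable_of_tendsto_ae atTop (fun n ↦ hφ _ (hsS (ns n))) ?_
  filter_upwards [hlim] with x hx using hx.inner tendsto_const_nhds

theorem exists_pos_memLp_two (μ : Measure X) [SigmaFinite μ] :
    ∃ w : X → ℝ, (∀ x, 0 < w x) ∧ MemLp w 2 μ := by
  obtain ⟨v, hv_pos, hv_meas, hv_int⟩ := exists_pos_lintegral_lt_of_sigmaFinite μ one_ne_zero
  have hmeas : AEStronglyMeasurable (fun x ↦ √(v x : ℝ)) μ := by fun_prop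
  refine ⟨fun x ↦ √(v x), fun x ↦ Real.sqrt_pos.2 (hv_pos x),
    (memLp_two_iff_integrable_sq hmeas).2 ?_⟩
  simp only [Real.sq_sqrt (NNReal.coe_nonneg _)]
  refine ⟨by fun_prop, ?_⟩
  simpa [HasFiniteIntegral] using hv_int.trans ENNReal.one_lt_top

theorem aestronglyMeasurable_of_forall_inner [FiniteDimensional ℝ E] [SigmaFinite μ] {φ : X → E}
    (hφ : ∀ g : Lp E 2 μ, AEStronglyMeasurable (fun x ↦ ⟪g x, φ x⟫_ℝ) μ) :
    AEStronglyMeasurable φ μ := by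
  obtain ⟨w, hw_pos, hw⟩ := exists_pos_memLp_two μ
  let b := stdOrthonormalBasis ℝ E
  have hcoord (i) : AEStronglyMeasurable (fun x ↦ ⟪b i, φ x⟫_ℝ) μ := by
    have hwb : MemLp (fun x ↦ w x • b i) 2 μ :=
      (ContinuousLinearMap.toSpanSingleton ℝ (b i)).comp_memLp' hw
    refine (hw.aestronglyMeasurable.inv₀.mul (hφ (hwb.toLp _))).congr ?_
    filter_upwards [hwb.coeFn_toLp] with x hx
    simp only [Pi.mul_apply, Pi.inv_apply, hx, real_inner_smul_left]
    exact inv_mul_cancel_left₀ (hw_pos x).ne' _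
  have hsum : φ = fun x ↦ ∑ i, ⟪b i, φ x⟫_ℝ • b i := funext fun x ↦ (b.sum_repr' (φ x)).symm
  rw [hsum]
  exact Finset.aestronglyMeasurable_fun_sum _ fun i _ ↦ (hcoord i).smul_const (b i)

theorem integral_norm_sub_sq_eq_dist_sq {φ : X → E} (hφ : MemLp φ 2 μ) (g : Lp E 2 μ) :
    ∫ x, ‖g x - φ x‖ ^ 2 ∂μ = dist g hφ.toLp ^ 2 := by
  rw [dist_eq_norm, ← real_inner_self_eq_norm_sq, L2.inner_def]
  refine integral_congr_ae ?_
  filter_upwards [Lp.coeFn_sub g hφ.toLp, hφ.coeFn_toLp] with x hsub hx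
  rw [hsub, Pi.sub_apply, hx, real_inner_self_eq_norm_sq]

theorem aestronglyMeasurable_inner_of_integrable_norm_sub_sq {φ : X → E}
    (hφ : Integrable (fun x ↦ ‖φ x‖ ^ 2) μ) {g : X → E} (hg : MemLp g 2 μ)
    (hsub : Integrable (fun x ↦ ‖g x - φ x‖ ^ 2) μ) :
    AEStronglyMeasurable (fun x ↦ ⟪g x, φ x⟫_ℝ) μ := by
  have hpolar (x : X) :
      ⟪g x, φ x⟫_ℝ = (‖g x‖ ^ 2 + ‖φ x‖ ^ 2 - ‖g x - φ x‖ ^ 2) / 2 := by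
    rw [norm_sub_sq_real]
    ring
  simp only [hpolar]
  exact ((((hg.integrable_norm_pow two_ne_zero).add hφ).sub hsub).div_const 2).aestronglyMeasurable

theorem exists_mem_integral_norm_sub_sq_lt [FiniteDimensional ℝ E] [SigmaFinite μ]
    {S : Set (Lp E 2 μ)} (hS : Dense S) {φ : X → E} (hφ : Integrable (fun x ↦ ‖φ x‖ ^ 2) μ)
    {ε : ℝ} (hε : 0 < ε) : ∃ g ∈ S, ∫ x, ‖g x - φ x‖ ^ 2 ∂μ < ε ^ 2 := by
  by_cases hmeas : AEStronglyMeasurable φ μ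
  · have hφ2 : MemLp φ 2 μ := (memLp_two_iff_integrable_sq_norm hmeas).2 hφ
    obtain ⟨g, hgS, hg⟩ := hS.exists_dist_lt hφ2.toLp hε
    refine ⟨g, hgS, ?_⟩
    rw [integral_norm_sub_sq_eq_dist_sq hφ2, dist_comm]
    gcongr
  · -- The integral is `0` by convention as soon as `‖g - φ‖ ^ 2` is not a.e. measurable.
    have hexists : ∃ g ∈ S, ¬Integrable (fun x ↦ ‖g x - φ x‖ ^ 2) μ := by
      by_contra! hint
      exact hmeas <| aestronglyMeasurable_of_forall_inner <|
        aestronglyMeasurable_inner_of_dense hS fun g hg ↦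
          aestronglyMeasurable_inner_of_integrable_norm_sub_sq hφ (Lp.memLp g) (hint g hg)
    obtain ⟨g, hgS, hg⟩ := hexists
    exact ⟨g, hgS, (integral_undef hg).trans_lt (by positivity)⟩

end Approximation

theorem range_dense_general {V : ℝ → ℂ} (hV : Continuous V) (hre : ∀ x, 0 ≤ (V x).re)
    {φ : ℝ → ℂ} (hφ : Integrable fun x ↦ ‖φ x‖ ^ 2) {ε : ℝ} (hε : 0 < ε) :
    ∃ ψ : ℝ → ℂ, ContDiff ℝ ∞ ψ ∧ HasCompactSupport ψ ∧
      ∫ x, ‖schrodinger V ψ x - φ x‖ ^ 2 < ε ^ 2 := by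
  obtain ⟨_, ⟨ψ, rfl⟩, hlt⟩ :=
    exists_mem_integral_norm_sub_sq_lt (denseRange_schrodingerL2 hV hre) hφ hε
  refine ⟨ψ, ψ.2.1, ψ.2.2, lt_of_eq_of_lt (integral_congr_ae ?_) hlt⟩
  filter_upwards [coeFn_schrodingerL2 hV ψ] with x hx using by rw [hx]

/-- For `Re z < 0`, the range of `H - z` on `C_c^∞(ℝ)` is dense in `L²(ℝ,ℂ)`. -/
theorem range_dense (z : ℂ) (hz : z.re < 0) :
    ∀ φ : ℝ → ℂ, Integrable (fun x : ℝ => ‖φ x‖ ^ 2) →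
      ∀ ε > (0 : ℝ), ∃ ψ : ℝ → ℂ, ContDiff ℝ (⊤ : ℕ∞) ψ ∧ HasCompactSupport ψ ∧
        (∫ x : ℝ,
            ‖-(deriv (deriv ψ) x) + Complex.I * (x : ℂ) ^ 3 * ψ x - z * ψ x - φ x‖ ^ 2)
          < ε ^ 2 := by
  intro φ hφ ε hε
  have hre (x : ℝ) : 0 ≤ (Complex.I * (x : ℂ) ^ 3 - z).re := by
    rw [Complex.sub_re, ← Complex.ofReal_pow, Complex.I_mul_re, Complex.ofReal_im]
    linarith
  simpa only [schrodinger, sub_mul, ← add_sub_assoc] using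
    range_dense_general (by fun_prop) hre hφ hε
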